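/- arXiv:1909.06634 — 3 statements merged into one kernel-verified Lean document; each statement's English description precedes it below -/
import Mathlib

section
/- Let g be a positive differentiable function on [γ, ∞) with γ ≥ 1, and suppose there is 0 < α < 1 with 0 < a(x; g) < α for all x ≥ γ. Then g and x ↦ x/g(x) are both increasing on [γ, ∞), and for every x > γ, ∫_γ^x dt/g(t) ≤ (1/(1−α)) · ( x/g(x) − γ/g(γ) ). -/
theorem mono_and_integral_bound (g : ℝ → ℝ) (γ α : ℝ) (hγ : 1 ≤ γ)
    (hα0 : 0 < α) (hα1 : α < 1)
    (hgpos : ∀ x ≥ γ, 0 < g x)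
    (hgdiff : ∀ x ≥ γ, DifferentiableAt ℝ g x)
    (ha : ∀ x ≥ γ, 0 < x * deriv g x / g x ∧ x * deriv g x / g x < α) :
    StrictMonoOn g (Set.Ici γ) ∧
      StrictMonoOn (fun x => x / g x) (Set.Ici γ) ∧
      ∀ x > γ, (∫ t in γ..x, 1 / g t) ≤ (1 / (1 - α)) * (x / g x - γ / g γ) := by
  have hd : ∀ x ≥ γ, HasDerivAt (fun x => x / g x) ((1 * g x - x * deriv g x) / g x ^ 2) x :=
    fun x hx => (hasDerivAt_id x).div (hgdiff x hx).hasDerivAt (hgpos x hx).ne'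
  have hb : ∀ x ≥ γ, (1 - α) * (1 / g x) ≤ (1 * g x - x * deriv g x) / g x ^ 2 := by
    intro x hx
    have hp := hgpos x hx
    have h := (ha x hx).2
    have e : (1 * g x - x * deriv g x) / g x ^ 2 = (1 - x * deriv g x / g x) * (1 / g x) := by
      field_simp
    rw [e]
    have : 0 < 1 / g x := by positivity
    exact mul_le_mul_of_nonneg_right (by linarith) this.le
  have h1α : 0 < 1 - α := by linarith
  refine ⟨?_, ?_, ?_⟩
  · refine strictMonoOn_of_deriv_pos (convex_Ici γ)
      (fun x hx => (hgdiff x hx).continuousAt.continuousWithinAt) ?_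
    intro x hx
    rw [interior_Ici] at hx
    have hx' : γ ≤ x := le_of_lt hx
    have hp := hgpos x hx'
    have h := (ha x hx').1
    have h2 : 0 < x * deriv g x := by
      by_contra hc
      exact absurd h (not_lt.2 (div_nonpos_of_nonpos_of_nonneg (not_lt.1 hc) hp.le))
    exact pos_of_mul_pos_right h2 (by linarith)
  · refine strictMonoOn_of_deriv_pos (convex_Ici γ)
      (fun x hx => (hd x hx).continuousAt.continuousWithinAt) ?_
    intro x hx
    rw [interior_Ici] at hx
    have hx' : γ ≤ x := le_of_lt hx
    have hp := hgpos x hx'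
    rw [(hd x hx').deriv]
    exact lt_of_lt_of_le (by positivity) (hb x hx')
  · intro x hx
    have hx' : γ ≤ x := le_of_lt hx
    have hc : ContinuousOn (fun t => (1 - α) * (1 / g t)) (Set.Icc γ x) := by
      refine continuousOn_const.mul (continuousOn_const.div ?_ ?_)
      · exact fun t ht => (hgdiff t ht.1).continuousAt.continuousWithinAt
      · exact fun t ht => (hgpos t ht.1).ne'
    have key := intervalIntegral.integral_le_sub_of_hasDeriv_right_of_le hx'
      (g := fun x => x / g x)
      (fun t ht => (hd t ht.1).continuousAt.continuousWithinAt)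
      (fun t ht => (hd t ht.1.le).hasDerivWithinAt)
      hc.integrableOn_Icc
      (fun t ht => hb t ht.1.le)
    rw [intervalIntegral.integral_const_mul] at key
    rw [one_div_mul_eq_div, le_div_iff₀ h1α, mul_comm]
    exact key
end

section
/- Let g be a positive differentiable function on [γ, ∞) with γ ≥ 1, and suppose there is 0 < α < 1 with 0 < a(x; g) < α for all x ≥ γ. Then for every p ≥ 1, 1/g(γ) + ∫_0^p dt/g(t+γ) < (1/(1−α)) · (p+γ)/g(p+γ). -/
theorem shifted_integral_bound (g : ℝ → ℝ) (γ α : ℝ) (hγ : 1 ≤ γ)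
    (hα0 : 0 < α) (hα1 : α < 1)
    (hgpos : ∀ x ≥ γ, 0 < g x)
    (hgdiff : ∀ x ≥ γ, DifferentiableAt ℝ g x)
    (ha : ∀ x ≥ γ, 0 < x * deriv g x / g x ∧ x * deriv g x / g x < α) :
    ∀ p : ℝ, 1 ≤ p →
      1 / g γ + (∫ t in (0:ℝ)..p, 1 / g (t + γ)) < (1 / (1 - α)) * ((p + γ) / g (p + γ)) := by
  intro p hp
  have h1α : 0 < 1 - α := by linarith
  have hge : ∀ t : ℝ, max t 0 + γ ≥ γ := fun t => by
    have := le_max_right t 0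
    linarith
  have hGc : Continuous (fun t : ℝ => 1 / g (max t 0 + γ)) := by
    refine Continuous.div continuous_const ?_ (fun t => (hgpos _ (hge t)).ne')
    rw [continuous_iff_continuousAt]
    intro t
    exact ContinuousAt.comp (f := fun t : ℝ => max t 0 + γ) (g := g)
      (hgdiff _ (hge t)).continuousAt (by fun_prop)
  have hint : (∫ t in (0:ℝ)..p, 1 / g (t + γ)) = ∫ t in (0:ℝ)..p, 1 / g (max t 0 + γ) := by
    apply intervalIntegral.integral_congr
    intro t ht
    rw [Set.uIcc_of_le (by linarith)] at ht
    simp only [max_eq_left ht.1]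
  rw [hint]
  have hder : ∀ t : ℝ, 0 ≤ t → HasDerivAt
      (fun s : ℝ => (1 / (1 - α)) * ((s + γ) / g (s + γ)) - ∫ t in (0:ℝ)..s, 1 / g (max t 0 + γ))
      ((1 / (1 - α)) * ((1 * g (t + γ) - (t + γ) * deriv g (t + γ)) / g (t + γ) ^ 2)
        - 1 / g (max t 0 + γ)) t := by
    intro t ht
    have hx : t + γ ≥ γ := by linarith
    have h1 : HasDerivAt (fun s : ℝ => s + γ) 1 t := (hasDerivAt_id t).add_const γ
    have h2 : HasDerivAt (fun s : ℝ => g (s + γ)) (deriv g (t + γ)) t :=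
      (hgdiff _ hx).hasDerivAt.comp_add_const t γ
    exact ((h1.div h2 (hgpos _ hx).ne').const_mul _).sub
      (hGc.integral_hasStrictDerivAt 0 t).hasDerivAt
  have hmono := strictMonoOn_of_deriv_pos (convex_Icc (0:ℝ) p)
    (fun t ht => (hder t ht.1).continuousAt.continuousWithinAt) (by
      intro t ht
      rw [interior_Icc] at ht
      have ht0 : 0 ≤ t := ht.1.le
      rw [(hder t ht0).deriv, max_eq_left ht0]
      have hx : t + γ ≥ γ := by linarith
      have hg := hgpos _ hx
      have h2 := (ha _ hx).2
      have e : (1 / (1 - α)) * ((1 * g (t + γ) - (t + γ) * deriv g (t + γ)) / g (t + γ) ^ 2)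
        - 1 / g (t + γ) = (α - (t + γ) * deriv g (t + γ) / g (t + γ)) / ((1 - α) * g (t + γ)) := by
        field_simp
        ring
      rw [e]
      exact div_pos (by linarith) (by positivity))
  have h := hmono (Set.left_mem_Icc.2 (by linarith)) (Set.right_mem_Icc.2 (by linarith))
    (show (0:ℝ) < p by linarith)
  simp only [intervalIntegral.integral_same, zero_add, sub_zero] at h
  have hg := hgpos γ le_rfl
  have h0 : 1 / g γ ≤ (1 / (1 - α)) * (γ / g γ) := by
    rw [div_mul_div_comm, div_le_div_iff₀ hg (by positivity)]
    nlinarith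
  linarith
end

section
/- Fix an integer q ≥ 1 and a constant γ ≥ 1 such that log_{q+1} x > 0 for all x ≥ γ. Then L_q(p+γ) · [ log_{q+1}(p+1+γ) − log_{q+1}(1+γ) ] ∼ L_{q+1}(p) as p → ∞; that is, the ratio L_q(p+γ)·[log_{q+1}(p+1+γ) − log_{q+1}(1+γ)] / L_{q+1}(p) tends to 1 as p → ∞. -/
open Finset Filter

noncomputable section

/-- Iterated logarithm: `iterLog 1 = log`, `iterLog (j+1) = log ∘ iterLog j`. -/
def iterLog : ℕ → ℝ → ℝ
  | 0, x => x
  | j + 1, x => Real.log (iterLog j x)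

/-- `Lfun q x = ∏_{j=1}^q log_j x`. -/
def Lfun (q : ℕ) (x : ℝ) : ℝ := ∏ j ∈ Finset.Icc 1 q, iterLog j x

theorem iterLog_tendsto (j : ℕ) : Tendsto (iterLog j) atTop atTop := by
  induction j with
  | zero => exact tendsto_id
  | succ k ih => exact Real.tendsto_log_atTop.comp ih

theorem iterLog_ratio (c : ℝ) (j : ℕ) :
    Tendsto (fun p : ℝ => iterLog j (p + c) / iterLog j p) atTop (nhds 1) := by
  induction j with
  | zero =>
    have h : Tendsto (fun p : ℝ => 1 + c / p) atTop (nhds (1 + 0)) :=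
      tendsto_const_nhds.add (tendsto_const_nhds.div_atTop tendsto_id)
    rw [add_zero] at h
    refine h.congr' ?_
    filter_upwards [eventually_gt_atTop 0] with p hp
    simp only [iterLog]
    field_simp
  | succ k ih =>
    have hlog : Tendsto (fun p : ℝ => Real.log (iterLog k (p + c) / iterLog k p))
        atTop (nhds 0) := by
      have := (Real.continuousAt_log one_ne_zero).tendsto.comp ih
      rwa [Real.log_one] at this
    have h := (tendsto_const_nhds (x := (1 : ℝ))).add (hlog.div_atTop (iterLog_tendsto (k + 1)))
    rw [add_zero] at h
    refine h.congr' ?_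
    have hc : Tendsto (fun p : ℝ => iterLog k (p + c)) atTop atTop :=
      (iterLog_tendsto k).comp (tendsto_atTop_add_const_right _ c tendsto_id)
    filter_upwards [(iterLog_tendsto k).eventually_gt_atTop 0, hc.eventually_gt_atTop 0,
      (iterLog_tendsto (k + 1)).eventually_gt_atTop 0] with p h1 h2 h3
    rw [Real.log_div h2.ne' h1.ne']
    simp only [iterLog] at h3 ⊢
    field_simp
    ring

theorem iterlog_asymptotic (q : ℕ) (hq : 1 ≤ q) (γ : ℝ) (hγ : 1 ≤ γ)
    (hpos : ∀ x ≥ γ, 0 < iterLog (q + 1) x) :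
    Tendsto (fun p : ℝ =>
        Lfun q (p + γ) * (iterLog (q + 1) (p + 1 + γ) - iterLog (q + 1) (1 + γ)) /
          Lfun (q + 1) p)
      atTop (nhds 1) := by
  have hprod : Tendsto (fun p : ℝ => ∏ j ∈ Finset.Icc 1 q, iterLog j (p + γ) / iterLog j p)
      atTop (nhds (∏ j ∈ Finset.Icc 1 q, (1 : ℝ))) :=
    tendsto_finsetProd _ fun j _ => iterLog_ratio γ j
  have h2 := (iterLog_ratio (1 + γ) (q + 1)).sub
    ((tendsto_const_nhds (x := iterLog (q + 1) (1 + γ))).div_atTop (iterLog_tendsto (q + 1)))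
  have h := hprod.mul h2
  rw [Finset.prod_const_one, sub_zero, one_mul] at h
  refine h.congr fun p => ?_
  rw [Finset.prod_div_distrib, ← sub_div, div_mul_div_comm, ← add_assoc]
  simp only [Lfun]
  rw [Finset.prod_Icc_succ_top (by omega : 1 ≤ q + 1)]
end
end
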